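/- Let λ ∈ (0,1), u = λ^{36}, Z(λ) = diag(λ⁴ I₃, λ³ I₂, I₄) (9×9), and let Θ(λ) be the 9×9 block diagonal matrix diag(−u⁴, u⁴ R_{7π/8}, u³ R_{π/2}, R_{π/4}, −R_{π/4}), where R_θ is the 2×2 counterclockwise rotation by θ. Then: (i) Θ(λ) = Θ(1) Z(λ)^{36}; (ii) Θ(1)^{16} = I₉; and (iii) Σ_{m=0}^{15} Θ(1)^m = 0. -/

import Mathlib

/-!
The block diagonal matrices whose blocks are one real scalar and four matrices
`[[Re z, -Im z], [Im z, Re z]]` form the image of a ring homomorphism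
`blockHom : ℝ × ℂ × ℂ × ℂ × ℂ →+* Matrix (Fin 9) (Fin 9) ℝ`, and `Theta 1` is the image of
`ω = (-1, e^{7πi/8}, e^{πi/2}, e^{πi/4}, -e^{πi/4})`. Each component of `ω` is a root of unity
of order dividing 16 and different from 1, so `ω ^ 16 = 1`, and the geometric sum of its first
16 powers vanishes componentwise; both identities pass to `Theta 1`. The first identity only
uses that `Z19 l` is diagonal.
-/

open Matrix Finset
open scoped Real

/-- `Θ(λ) = diag(−u⁴, u⁴ R_{7π/8}, u³ R_{π/2}, R_{π/4}, −R_{π/4})` with `u = λ³⁶`. -/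
noncomputable def Theta (l : ℝ) : Matrix (Fin 9) (Fin 9) ℝ :=
  !![-(l ^ 36) ^ 4, 0, 0, 0, 0, 0, 0, 0, 0;
     0, (l ^ 36) ^ 4 * Real.cos (7 * π / 8), -((l ^ 36) ^ 4 * Real.sin (7 * π / 8)),
       0, 0, 0, 0, 0, 0;
     0, (l ^ 36) ^ 4 * Real.sin (7 * π / 8), (l ^ 36) ^ 4 * Real.cos (7 * π / 8),
       0, 0, 0, 0, 0, 0;
     0, 0, 0, (l ^ 36) ^ 3 * Real.cos (π / 2), -((l ^ 36) ^ 3 * Real.sin (π / 2)),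
       0, 0, 0, 0;
     0, 0, 0, (l ^ 36) ^ 3 * Real.sin (π / 2), (l ^ 36) ^ 3 * Real.cos (π / 2),
       0, 0, 0, 0;
     0, 0, 0, 0, 0, Real.cos (π / 4), -Real.sin (π / 4), 0, 0;
     0, 0, 0, 0, 0, Real.sin (π / 4), Real.cos (π / 4), 0, 0;
     0, 0, 0, 0, 0, 0, 0, -Real.cos (π / 4), Real.sin (π / 4);
     0, 0, 0, 0, 0, 0, 0, -Real.sin (π / 4), -Real.cos (π / 4)]

/-- `Z(λ) = diag(λ⁴ I₃, λ³ I₂, I₄)`. -/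
noncomputable def Z19 (l : ℝ) : Matrix (Fin 9) (Fin 9) ℝ :=
  Matrix.diagonal ![l ^ 4, l ^ 4, l ^ 4, l ^ 3, l ^ 3, 1, 1, 1, 1]

/-- The block diagonal matrix with scalar block `e` and blocks `[[Re z, -Im z], [Im z, Re z]]` for
`z` running through the four complex components; the latter is multiplication by `z` on
`ℂ ≅ ℝ²`, so `e^{iθ}` gives the rotation by `θ`. -/
def blockMat (p : ℝ × ℂ × ℂ × ℂ × ℂ) : Matrix (Fin 9) (Fin 9) ℝ :=
  match p with
  | (e, a, b, c, d) =>
  !![e, 0, 0, 0, 0, 0, 0, 0, 0;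
     0, a.re, -a.im, 0, 0, 0, 0, 0, 0;
     0, a.im, a.re, 0, 0, 0, 0, 0, 0;
     0, 0, 0, b.re, -b.im, 0, 0, 0, 0;
     0, 0, 0, b.im, b.re, 0, 0, 0, 0;
     0, 0, 0, 0, 0, c.re, -c.im, 0, 0;
     0, 0, 0, 0, 0, c.im, c.re, 0, 0;
     0, 0, 0, 0, 0, 0, 0, d.re, -d.im;
     0, 0, 0, 0, 0, 0, 0, d.im, d.re]

set_option maxHeartbeats 4000000 in
lemma blockMat_mul (p q : ℝ × ℂ × ℂ × ℂ × ℂ) :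
    blockMat (p * q) = blockMat p * blockMat q := by
  obtain ⟨e, a, b, c, d⟩ := p
  obtain ⟨e', a', b', c', d'⟩ := q
  ext i j
  fin_cases i <;> fin_cases j <;>
    simp [blockMat, Matrix.mul_apply, Fin.sum_univ_succ] <;> ring

set_option maxHeartbeats 4000000 in
lemma blockMat_add (p q : ℝ × ℂ × ℂ × ℂ × ℂ) :
    blockMat (p + q) = blockMat p + blockMat q := by
  obtain ⟨e, a, b, c, d⟩ := p
  obtain ⟨e', a', b', c', d'⟩ := q
  ext i j
  fin_cases i <;> fin_cases j <;> simp [blockMat] <;> ring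

lemma blockMat_zero : blockMat 0 = 0 := by
  ext i j
  fin_cases i <;> fin_cases j <;> simp [blockMat]

lemma blockMat_one : blockMat 1 = 1 := by
  ext i j
  fin_cases i <;> fin_cases j <;> simp [blockMat]

/-- `blockMat` as a ring homomorphism. -/
def blockHom : ℝ × ℂ × ℂ × ℂ × ℂ →+* Matrix (Fin 9) (Fin 9) ℝ where
  toFun := blockMat
  map_one' := blockMat_one
  map_mul' := blockMat_mul
  map_zero' := blockMat_zero
  map_add' := blockMat_add

/-- The unit complex number `e^{iθ}`. -/
noncomputable def cis (θ : ℝ) : ℂ := Complex.exp (θ * Complex.I)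

lemma cis_re (θ : ℝ) : (cis θ).re = Real.cos θ := Complex.exp_ofReal_mul_I_re θ

lemma cis_im (θ : ℝ) : (cis θ).im = Real.sin θ := Complex.exp_ofReal_mul_I_im θ

lemma cis_pow (θ : ℝ) (n : ℕ) : cis θ ^ n = cis (n * θ) := by
  rw [cis, cis, ← Complex.exp_nat_mul]
  push_cast
  ring_nf

lemma cis_nat_mul_two_pi (n : ℕ) : cis (n * (2 * π)) = 1 := by
  rw [cis, Complex.exp_eq_one_iff]
  exact ⟨n, by push_cast; ring⟩

/-- The element of `ℝ × ℂ⁴` whose image under `blockHom` is `Theta 1`. -/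
noncomputable def omegaVec : ℝ × ℂ × ℂ × ℂ × ℂ :=
  (-1, cis (7 * π / 8), cis (π / 2), cis (π / 4), -cis (π / 4))

lemma blockHom_omegaVec : blockHom omegaVec = Theta 1 := by
  simp [blockHom, blockMat, omegaVec, Theta, cis_re, cis_im]

lemma cis_pow_sixteen (k : ℕ) : cis (k * (π / 8)) ^ 16 = 1 := by
  rw [cis_pow, ← cis_nat_mul_two_pi k]
  congr 1
  push_cast
  ring

lemma omegaVec_pow : omegaVec ^ 16 = 1 := by
  have h1 : cis (7 * π / 8) ^ 16 = 1 := by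
    rw [← cis_pow_sixteen 7]; congr 2; push_cast; ring
  have h2 : cis (π / 2) ^ 16 = 1 := by
    rw [← cis_pow_sixteen 4]; congr 2; push_cast; ring
  have h3 : cis (π / 4) ^ 16 = 1 := by
    rw [← cis_pow_sixteen 2]; congr 2; push_cast; ring
  have h4 : (-cis (π / 4)) ^ 16 = 1 := by
    rw [Even.neg_pow (by decide), h3]
  have h0 : (-1 : ℝ) ^ 16 = 1 := by norm_num
  simp only [omegaVec, Prod.pow_mk, h0, h1, h2, h3, h4]
  rfl

/-- A root of unity other than `1` has vanishing geometric sum over a full period. -/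
lemma geom_sum_eq_zero_of_pow {K : Type*} [Field K] {z : K} {n : ℕ} (h : z ^ n = 1)
    (h1 : z ≠ 1) : ∑ m ∈ Finset.range n, z ^ m = 0 := by
  rw [geom_sum_eq h1, h, sub_self, zero_div]

/-- The positive imaginary part shows that neither `e^{iθ}` nor `-e^{iθ}` equals `1`. -/
lemma cis_im_pos {θ : ℝ} (h0 : 0 < θ) (h1 : θ < π) : 0 < (cis θ).im := by
  rw [cis_im]
  exact Real.sin_pos_of_pos_of_lt_pi h0 h1

lemma ne_one_of_im_ne_zero {z : ℂ} (h : z.im ≠ 0) : z ≠ 1 := by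
  rintro rfl
  exact h Complex.one_im

lemma omegaVec_sum : ∑ m ∈ Finset.range 16, omegaVec ^ m = 0 := by
  have hp := Real.pi_pos
  have hw := omegaVec_pow
  simp only [Prod.ext_iff, Prod.pow_fst, Prod.pow_snd, Prod.fst_one, Prod.snd_one] at hw
  obtain ⟨w0, w1, w2, w3, w4⟩ := hw
  have i1 := cis_im_pos (θ := 7 * π / 8) (by linarith) (by linarith)
  have i2 := cis_im_pos (θ := π / 2) (by linarith) (by linarith)
  have i3 := cis_im_pos (θ := π / 4) (by linarith) (by linarith)
  simp only [Prod.ext_iff, Prod.fst_sum, Prod.snd_sum, Prod.pow_fst, Prod.pow_snd,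
    Prod.fst_zero, Prod.snd_zero]
  refine ⟨geom_sum_eq_zero_of_pow w0 ?_, geom_sum_eq_zero_of_pow w1 ?_,
    geom_sum_eq_zero_of_pow w2 ?_, geom_sum_eq_zero_of_pow w3 ?_,
    geom_sum_eq_zero_of_pow w4 ?_⟩
  · norm_num [omegaVec]
  · exact ne_one_of_im_ne_zero i1.ne'
  · exact ne_one_of_im_ne_zero i2.ne'
  · exact ne_one_of_im_ne_zero i3.ne'
  · refine ne_one_of_im_ne_zero ?_
    simpa [omegaVec] using i3.ne'

lemma Theta_eq_mul (l : ℝ) : Theta l = Theta 1 * (Z19 l) ^ 36 := by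
  rw [Z19, Matrix.diagonal_pow]
  ext i j
  rw [Matrix.mul_diagonal]
  fin_cases i <;> fin_cases j <;> simp [Theta] <;> ring

/-- `Θ(λ) = Θ(1) Z(λ)³⁶`, `Θ(1)¹⁶ = I₉` and `Σ_{m<16} Θ(1)^m = 0`. -/
theorem theta_identities_stmt19 (l : ℝ) (hl0 : 0 < l) (hl1 : l < 1) :
    Theta l = Theta 1 * (Z19 l) ^ 36 ∧
    (Theta 1) ^ 16 = 1 ∧
    ∑ m ∈ Finset.range 16, (Theta 1) ^ m = 0 := by
  refine ⟨Theta_eq_mul l, ?_, ?_⟩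
  · rw [← blockHom_omegaVec, ← map_pow, omegaVec_pow, map_one]
  · simp only [← blockHom_omegaVec, ← map_pow]
    rw [← map_sum, omegaVec_sum, map_zero]
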